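/- arXiv:1307.1804 — 2 statements merged into one kernel-verified Lean document; each statement's English description precedes it below -/
import Mathlib

section
/- Let k be a commutative ring, R a commutative k-algebra, B an R-algebra whose underlying R-module is finitely presented, N a (B,R)-dimodule, and S a flat commutative R-algebra. Then the canonical map Cent_R(B,N) ⊗_R S → Cent_S(B⊗_R S, N⊗_R S), sending χ ⊗ s to the map (b ⊗ t) ↦ χ(b) ⊗ st, is an isomorphism of S-modules. -/
open TensorProduct

/-- The `R`-submodule of `Hom_R(B,N)` consisting of the centroidal transformations
of the `R`-algebra `B` (multiplication `mul`) with values in the `(B,R)`-dimodule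
`N` (left action `lact`, right action `ract`). -/
def centSubmodule {R B N : Type*} [CommRing R]
    [AddCommGroup B] [Module R B] [AddCommGroup N] [Module R N]
    (mul : B →ₗ[R] B →ₗ[R] B)
    (lact : B →ₗ[R] N →ₗ[R] N) (ract : N →ₗ[R] B →ₗ[R] N) :
    Submodule R (B →ₗ[R] N) where
  carrier := {χ | ∀ b₁ b₂ : B,
    χ (mul b₁ b₂) = ract (χ b₁) b₂ ∧ χ (mul b₁ b₂) = lact b₁ (χ b₂)}
  add_mem' := by
    intro f g hf hg b₁ b₂
    constructor
    · simp only [LinearMap.add_apply, (hf b₁ b₂).1, (hg b₁ b₂).1, map_add,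
        LinearMap.add_apply]
    · simp only [LinearMap.add_apply, (hf b₁ b₂).2, (hg b₁ b₂).2, map_add]
  zero_mem' := by intro b₁ b₂; simp
  smul_mem' := by
    intro c f hf b₁ b₂
    constructor
    · simp only [LinearMap.smul_apply, (hf b₁ b₂).1, map_smul, LinearMap.smul_apply]
    · simp only [LinearMap.smul_apply, (hf b₁ b₂).2, map_smul]

/-!
The centroid is the kernel of the linear map sending `χ` to the two bilinear maps that measure its
failure to commute with the right and left actions. Flatness and finite presentation of `B` make
formation of `Hom(B, -)`, hence also of bilinear maps on `B`, commute with base change to `S`, and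
flat base change preserves kernels.
-/

section Hom

variable {R S M N P Q : Type*} [CommRing R] [CommRing S] [Algebra R S]
  [AddCommGroup M] [Module R M] [AddCommGroup N] [Module R N]
  [AddCommMonoid P] [Module R P] [Module S P] [IsScalarTower R S P]
  [AddCommMonoid Q] [Module R Q] [Module S Q] [IsScalarTower R S Q]

theorem isBaseChange_linearMapLeftRightHom_of_finitePresentation
    [Module.Flat R S] [Module.FinitePresentation R M]
    {α : M →ₗ[R] P} (hα : IsBaseChange S α) {β : N →ₗ[R] Q} (hβ : IsBaseChange S β) :
    IsBaseChange S (hα.linearMapLeftRightHom β) := by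
  refine .of_equiv ((Module.FinitePresentation.isBaseChange_map R M N S).equiv ≪≫ₗ
    hα.equiv.arrowCongr hβ.equiv) fun χ ↦ ?_
  refine hα.algHom_ext _ _ fun m ↦ ?_
  simp

end Hom

section Centroid

variable {R B N S : Type*} [CommRing R] [AddCommGroup B] [Module R B] [AddCommGroup N] [Module R N]

/-- The pair of bilinear maps `(b₁, b₂) ↦ χ (b₁ b₂) - χ b₁ · b₂` and
`(b₁, b₂) ↦ χ (b₁ b₂) - b₁ · χ b₂` measuring the failure of `χ` to be centroidal. -/
def centroidDefect (mul : B →ₗ[R] B →ₗ[R] B)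
    (lact : B →ₗ[R] N →ₗ[R] N) (ract : N →ₗ[R] B →ₗ[R] N) :
    (B →ₗ[R] N) →ₗ[R] (B →ₗ[R] B →ₗ[R] N) × (B →ₗ[R] B →ₗ[R] N) where
  toFun χ := (mul.compr₂ χ - ract ∘ₗ χ, mul.compr₂ χ - lact.compl₂ χ)
  map_add' χ ψ := by ext <;> simp [add_sub_add_comm]
  map_smul' r χ := by ext <;> simp [smul_sub]

variable (mul : B →ₗ[R] B →ₗ[R] B) (lact : B →ₗ[R] N →ₗ[R] N) (ract : N →ₗ[R] B →ₗ[R] N)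

theorem centroidDefect_fst_apply (χ : B →ₗ[R] N) (b₁ b₂ : B) :
    (centroidDefect mul lact ract χ).1 b₁ b₂ = χ (mul b₁ b₂) - ract (χ b₁) b₂ := rfl

theorem centroidDefect_snd_apply (χ : B →ₗ[R] N) (b₁ b₂ : B) :
    (centroidDefect mul lact ract χ).2 b₁ b₂ = χ (mul b₁ b₂) - lact b₁ (χ b₂) := rfl

theorem ker_centroidDefect :
    LinearMap.ker (centroidDefect mul lact ract) = centSubmodule mul lact ract := by
  ext χ
  simp [centroidDefect, centSubmodule, sub_eq_zero, LinearMap.ext_iff, forall_and]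

theorem exact_subtype_centroidDefect :
    Function.Exact (centSubmodule mul lact ract).subtype (centroidDefect mul lact ract) := by
  rw [LinearMap.exact_iff, ker_centroidDefect, Submodule.range_subtype]

variable {mul lact ract} {B' N' : Type*} [CommRing S] [Algebra R S]
  [AddCommGroup B'] [Module R B'] [Module S B'] [IsScalarTower R S B']
  [AddCommGroup N'] [Module R N'] [Module S N'] [IsScalarTower R S N']
  {mul' : B' →ₗ[S] B' →ₗ[S] B'} {lact' : B' →ₗ[S] N' →ₗ[S] N'} {ract' : N' →ₗ[S] B' →ₗ[S] N'}
  {α : B →ₗ[R] B'} (hα : IsBaseChange S α) {β : N →ₗ[R] N'}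
  (hmul : ∀ b₁ b₂, mul' (α b₁) (α b₂) = α (mul b₁ b₂))
  (hlact : ∀ b n, lact' (α b) (β n) = β (lact b n))
  (hract : ∀ n b, ract' (β n) (α b) = β (ract n b))

include hmul hlact hract

theorem centroidDefect_linearMapLeftRightHom (χ : B →ₗ[R] N) :
    centroidDefect mul' lact' ract' (hα.linearMapLeftRightHom β χ) =
      (hα.linearMapLeftRightHom (hα.linearMapLeftRightHom β)).prodMap
        (hα.linearMapLeftRightHom (hα.linearMapLeftRightHom β))
        (centroidDefect mul lact ract χ) := by
  refine Prod.ext ?_ ?_ <;>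
    refine hα.algHom_ext _ _ fun b₁ ↦ hα.algHom_ext _ _ fun b₂ ↦ ?_
  · simp [centroidDefect_fst_apply, hmul, hract]
  · simp [centroidDefect_snd_apply, hmul, hlact]

theorem linearMapLeftRightHom_mem_centSubmodule {χ : B →ₗ[R] N}
    (hχ : χ ∈ centSubmodule mul lact ract) :
    hα.linearMapLeftRightHom β χ ∈ centSubmodule mul' lact' ract' := by
  rw [← ker_centroidDefect, LinearMap.mem_ker] at hχ ⊢
  rw [centroidDefect_linearMapLeftRightHom hα hmul hlact hract, hχ, map_zero]

/-- The canonical map from the centroid over `R` to the centroid over `S`, extending centroidal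
transformations `S`-linearly along base changes `α : B → B'` and `β : N → N'`. -/
noncomputable def centBaseChange :
    centSubmodule mul lact ract →ₗ[R] centSubmodule mul' lact' ract' :=
  (hα.linearMapLeftRightHom β ∘ₗ (centSubmodule mul lact ract).subtype).codRestrict
    ((centSubmodule mul' lact' ract').restrictScalars R)
    fun χ ↦ linearMapLeftRightHom_mem_centSubmodule hα hmul hlact hract χ.2

theorem subtype_comp_centBaseChange :
    hα.linearMapLeftRightHom β ∘ₗ (centSubmodule mul lact ract).subtype =
      (centSubmodule mul' lact' ract').subtype.restrictScalars R ∘ₗ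
        centBaseChange hα hmul hlact hract := rfl

theorem centBaseChange_apply_apply (χ : centSubmodule mul lact ract) (b : B) :
    (centBaseChange hα hmul hlact hract χ).1 (α b) = β (χ.1 b) :=
  hα.linearMapLeftRightHom_comp_apply β χ.1 b

theorem isBaseChange_centBaseChange [Module.Flat R S] [Module.FinitePresentation R B]
    (hβ : IsBaseChange S β) : IsBaseChange S (centBaseChange hα hmul hlact hract) := by
  have hHom := isBaseChange_linearMapLeftRightHom_of_finitePresentation hα hβ
  have hBilin := isBaseChange_linearMapLeftRightHom_of_finitePresentation hα hHom
  have hdefect : (hα.linearMapLeftRightHom (hα.linearMapLeftRightHom β)).prodMap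
        (hα.linearMapLeftRightHom (hα.linearMapLeftRightHom β)) ∘ₗ
          centroidDefect mul lact ract =
      (centroidDefect mul' lact' ract').restrictScalars R ∘ₗ hα.linearMapLeftRightHom β :=
    LinearMap.ext fun χ ↦ (centroidDefect_linearMapLeftRightHom hα hmul hlact hract χ).symm
  exact .of_left_exact S _ _ _ (subtype_comp_centBaseChange hα hmul hlact hract) hdefect
    hHom (hBilin.prodMap _ _ hBilin)
    (exact_subtype_centroidDefect mul lact ract) (Submodule.injective_subtype _)
    (exact_subtype_centroidDefect mul' lact' ract') (Submodule.injective_subtype _)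

theorem comp_subtype_baseChange_eq_subtype_comp_equiv
    {γ : S ⊗[R] (B →ₗ[R] N) →ₗ[S] B' →ₗ[S] N'}
    (hγ : ∀ χ b, γ (1 ⊗ₜ χ) (α b) = β (χ b))
    (hcent : IsBaseChange S (centBaseChange hα hmul hlact hract)) :
    γ ∘ₗ (centSubmodule mul lact ract).subtype.baseChange S =
      (centSubmodule mul' lact' ract').subtype ∘ₗ hcent.equiv.toLinearMap := by
  refine TensorProduct.AlgebraTensorModule.curry_injective <| LinearMap.ext_ring <|
    LinearMap.ext fun χ ↦ hα.algHom_ext _ _ fun b ↦ ?_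
  simp [hγ, centBaseChange_apply_apply]

end Centroid

/-- Let `R` be a commutative `k`-algebra, `B` an `R`-algebra whose
underlying `R`-module is finitely presented, `N` a `(B,R)`-dimodule, and `S` a flat
commutative `R`-algebra.  Then the canonical map
`Cent_R(B,N) ⊗_R S → Cent_S(B ⊗_R S, N ⊗_R S)`, `χ ⊗ s ↦ (b ⊗ t ↦ χ(b) ⊗ st)`,
is an isomorphism of `S`-modules; formalized: the composite `S`-linear map
`S ⊗[R] Cent_R(B,N) → S ⊗[R] Hom_R(B,N) → Hom_S(B_S, N_S)` is injective with range
exactly `Cent_S(B_S, N_S)`. -/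
theorem stmt_7 {k R B N S : Type*} [CommRing k] [CommRing R] [Algebra k R]
    [AddCommGroup B] [Module R B] [Module.FinitePresentation R B]
    [AddCommGroup N] [Module R N]
    [CommRing S] [Algebra R S] [Module.Flat R S]
    (mulB : B →ₗ[R] B →ₗ[R] B)
    (lactN : B →ₗ[R] N →ₗ[R] N) (ractN : N →ₗ[R] B →ₗ[R] N)
    (mulBS : (S ⊗[R] B) →ₗ[S] (S ⊗[R] B) →ₗ[S] (S ⊗[R] B))
    (hmulBS : ∀ (s₁ s₂ : S) (b₁ b₂ : B),
      mulBS (s₁ ⊗ₜ b₁) (s₂ ⊗ₜ b₂) = (s₁ * s₂) ⊗ₜ (mulB b₁ b₂))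
    (lactS : (S ⊗[R] B) →ₗ[S] (S ⊗[R] N) →ₗ[S] (S ⊗[R] N))
    (hlactS : ∀ (s₁ s₂ : S) (b : B) (n : N),
      lactS (s₁ ⊗ₜ b) (s₂ ⊗ₜ n) = (s₁ * s₂) ⊗ₜ (lactN b n))
    (ractS : (S ⊗[R] N) →ₗ[S] (S ⊗[R] B) →ₗ[S] (S ⊗[R] N))
    (hractS : ∀ (s₁ s₂ : S) (n : N) (b : B),
      ractS (s₁ ⊗ₜ n) (s₂ ⊗ₜ b) = (s₁ * s₂) ⊗ₜ (ractN n b))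
    (ω : (S ⊗[R] (B →ₗ[R] N)) →ₗ[S] ((S ⊗[R] B) →ₗ[S] (S ⊗[R] N)))
    (hω : ∀ (s t : S) (χ : B →ₗ[R] N) (b : B),
      ω (s ⊗ₜ χ) (t ⊗ₜ b) = (s * t) ⊗ₜ χ b) :
    Function.Injective
      (ω ∘ₗ ((centSubmodule mulB lactN ractN).subtype.baseChange S)) ∧
    Set.range
      ⇑(ω ∘ₗ ((centSubmodule mulB lactN ractN).subtype.baseChange S)) =
      {g : (S ⊗[R] B) →ₗ[S] (S ⊗[R] N) |
        ∀ u v : S ⊗[R] B,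
          g (mulBS u v) = ractS (g u) v ∧ g (mulBS u v) = lactS u (g v)} := by
  have hB := TensorProduct.isBaseChange R B S
  have hN := TensorProduct.isBaseChange R N S
  have hmul : ∀ b₁ b₂ : B, mulBS (1 ⊗ₜ b₁) (1 ⊗ₜ b₂) = 1 ⊗ₜ mulB b₁ b₂ := by simp [hmulBS]
  have hlact : ∀ (b : B) (n : N), lactS (1 ⊗ₜ b) (1 ⊗ₜ n) = 1 ⊗ₜ lactN b n := by simp [hlactS]
  have hract : ∀ (n : N) (b : B), ractS (1 ⊗ₜ n) (1 ⊗ₜ b) = 1 ⊗ₜ ractN n b := by simp [hractS]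
  have hcent := isBaseChange_centBaseChange hB hmul hlact hract hN
  rw [comp_subtype_baseChange_eq_subtype_comp_equiv hB hmul hlact hract (by simp [hω]) hcent,
    LinearMap.coe_comp]
  refine ⟨(Submodule.injective_subtype _).comp hcent.equiv.injective, ?_⟩
  rw [LinearEquiv.coe_coe, EquivLike.range_comp]
  exact Subtype.range_coe
end

section
/- Let k be a field of characteristic zero, g a finite-dimensional semisimple Lie algebra over k, K a commutative associative unital k-algebra, and M a module over the Lie K-algebra g_K = g⊗_k K which is locally finite as a g-module (every element of M lies in a finite-dimensional g-submodule, where g acts via x ↦ x⊗1). Then every K-linear derivation of g_K with values in M is inner: for every K-linear map d : g_K → M with d([u,v]) = u·d(v) − v·d(u) for all u,v ∈ g_K, there exists m ∈ M such that d(u) = u·m for all u ∈ g_K. -/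
open TensorProduct

/-!
Whitehead's first lemma `H¹(g, W) = 0` holds for every finite-dimensional `W`. By induction along
submodules one may take `W` irreducible. If its trace form vanishes, Cartan's criterion makes `g`
act nilpotently, hence trivially, and a derivation vanishes on `⁅g, g⁆ = g`. Otherwise a complement
of the kernel of the trace form carries dual bases, hence an invariant tensor `t = ∑ eᵢ ⊗ fᵢ`
whose Casimir operator has nonzero trace and is therefore invertible by Schur's lemma.
Contraction with `t`, `D ↦ ∑ ⁅eᵢ, D fᵢ⁆`, is then an equivariant left inverse, up to that operator,
of the map sending an element of `W` to its inner derivation.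

The values of a derivation of `g` in a locally finite module lie in a finite-dimensional
submodule, and a `K`-linear derivation of `g_K` is determined by its restriction to `g`.
-/

namespace Whitehead

open LieAlgebra LieModule Module

section Contraction

variable {R L W : Type*} [CommRing R] [LieRing L] [LieAlgebra R L]
  [AddCommGroup W] [Module R W] [LieRingModule L W] [LieModule R L W]

/-- The contraction `e ⊗ f ↦ ⁅e, D f⁆` of a tensor in `L ⊗ L` against a derivation `D`. -/
noncomputable def contraction (t : L ⊗[R] L) : LieDerivation R L W →ₗ[R] W where
  toFun D := toModuleHom R L W (D.toLinearMap.lTensor L t)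
  map_add' D₁ D₂ := by simp [LinearMap.lTensor_add]
  map_smul' c D := by simp [LinearMap.lTensor_smul]

@[simp]
lemma contraction_tmul (e f : L) (D : LieDerivation R L W) :
    contraction (e ⊗ₜ[R] f) D = ⁅e, D f⁆ := by
  simp [contraction]

@[simp]
lemma contraction_zero (D : LieDerivation R L W) : contraction (0 : L ⊗[R] L) D = 0 := by
  simp [contraction]

@[simp]
lemma contraction_add (s t : L ⊗[R] L) (D : LieDerivation R L W) :
    contraction (s + t) D = contraction s D + contraction t D := by
  simp [contraction]

lemma lie_contraction (x : L) (t : L ⊗[R] L) (D : LieDerivation R L W) :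
    ⁅x, contraction t D⁆ = contraction ⁅x, t⁆ D + contraction t ⁅x, D⁆ := by
  induction t with
  | zero => simp
  | add s t hs ht => simp only [contraction_add, lie_add, hs, ht]; abel
  | tmul e f =>
    simp only [contraction_tmul, TensorProduct.LieModule.lie_tmul_right, contraction_add,
      LieDerivation.lie_lieDerivation_apply, LieDerivation.apply_lie_eq_sub, lie_sub]
    rw [leibniz_lie x e (D f)]
    abel

/-- The Casimir operator `w ↦ ∑ ⁅eᵢ, ⁅fᵢ, w⁆⁆` of an invariant tensor `∑ eᵢ ⊗ fᵢ`. Invariance is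
what makes it a morphism of Lie modules. -/
noncomputable def casimir (W : Type*) [AddCommGroup W] [Module R W] [LieRingModule L W]
    [LieModule R L W] (t : maxTrivSubmodule R L (L ⊗[R] L)) : W →ₗ⁅R,L⁆ W where
  __ := contraction t.1 ∘ₗ LieDerivation.inner R L W
  map_lie' {x w} := by
    have inner_lie : LieDerivation.inner R L W ⁅x, w⁆ = ⁅x, LieDerivation.inner R L W w⁆ := by
      ext; simp
    simp [inner_lie, lie_contraction, t.2 x]

lemma casimir_apply (t : maxTrivSubmodule R L (L ⊗[R] L)) (w : W) :
    casimir W t w = contraction t.1 (LieDerivation.inner R L W w) :=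
  rfl

lemma inner_surjective_of_casimir_bijective (t : maxTrivSubmodule R L (L ⊗[R] L))
    (ht : Function.Bijective (casimir W t)) :
    Function.Surjective (LieDerivation.inner R L W) := by
  intro D
  obtain ⟨m, hm⟩ := ht.surjective (contraction t.1 D)
  have contraction_sub : contraction t.1 (D - LieDerivation.inner R L W m) = 0 := by
    rw [map_sub, ← casimir_apply, hm, sub_self]
  refine ⟨m, LieDerivation.ext fun x ↦ ht.injective ?_⟩
  have casimir_sub : casimir W t ((D - LieDerivation.inner R L W m) x) = 0 := by
    have h := lie_contraction x t.1 (D - LieDerivation.inner R L W m)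
    rw [contraction_sub, t.2 x, lie_zero, contraction_zero, zero_add] at h
    exact h.symm
  rw [LieDerivation.sub_apply, map_sub, sub_eq_zero] at casimir_sub
  exact casimir_sub.symm

lemma trace_casimir (t : maxTrivSubmodule R L (L ⊗[R] L)) :
    LinearMap.trace R W (casimir W t : W →ₗ[R] W) =
      TensorProduct.lift (traceForm R L W) t.1 := by
  suffices ∀ s : L ⊗[R] L, LinearMap.trace R W (contraction s ∘ₗ LieDerivation.inner R L W) =
      TensorProduct.lift (traceForm R L W) s from this t.1
  intro s
  induction s with
  | zero =>
    have h : contraction (0 : L ⊗[R] L) ∘ₗ LieDerivation.inner R L W = 0 := by ext; simp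
    rw [h, map_zero, map_zero]
  | add s t hs ht =>
    have h : contraction (s + t) ∘ₗ LieDerivation.inner R L W =
        contraction s ∘ₗ LieDerivation.inner R L W +
          contraction t ∘ₗ LieDerivation.inner R L W := by ext; simp
    rw [h, map_add, map_add, hs, ht]
  | tmul e f =>
    have h : contraction (e ⊗ₜ[R] f) ∘ₗ LieDerivation.inner R L W =
        toEnd R L W e ∘ₗ toEnd R L W f := by ext; simp
    rw [h, TensorProduct.lift.tmul, traceForm_apply_apply]

end Contraction

section InvariantTensor

variable {k L V : Type*} [Field k] [LieRing L] [LieAlgebra k L]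
  [AddCommGroup V] [Module k V] [LieRingModule L V] [LieModule k L V]

lemma repr_eq_apply_dualBasis {ι : Type*} [Finite ι] [DecidableEq ι] {Φ : LinearMap.BilinForm k V}
    (hΦ : Φ.Nondegenerate) (b : Basis ι k V) (v : V) (i : ι) :
    b.repr v i = Φ (Φ.dualBasis hΦ b i) v := by
  refine LinearMap.congr_fun (f := b.coord i) (b.ext fun j ↦ ?_) v
  rw [LinearMap.BilinForm.apply_dualBasis_left, Basis.coord_apply, b.repr_self,
    Finsupp.single_apply]

lemma lie_sum_tmul_dualBasis {ι : Type*} [Fintype ι] [DecidableEq ι]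
    {Φ : LinearMap.BilinForm k V} (hΦ : Φ.Nondegenerate) (hinv : Φ.lieInvariant L)
    (b : Basis ι k V) (x : L) :
    ⁅x, ∑ i, b i ⊗ₜ[k] Φ.dualBasis hΦ b i⁆ = 0 := by
  set c := Φ.dualBasis hΦ b
  have lie_left (i : ι) : ⁅x, b i⁆ = ∑ j, Φ (c j) ⁅x, b i⁆ • b j := by
    simpa only [repr_eq_apply_dualBasis hΦ] using (b.sum_repr ⁅x, b i⁆).symm
  have lie_right (i : ι) : ⁅x, c i⁆ = ∑ j, Φ ⁅x, c i⁆ (b j) • c j := by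
    simpa only [c, LinearMap.BilinForm.dualBasis_repr_apply] using (c.sum_repr ⁅x, c i⁆).symm
  calc ⁅x, ∑ i, b i ⊗ₜ[k] c i⁆
      = ∑ i, ⁅x, b i⁆ ⊗ₜ c i + ∑ i, b i ⊗ₜ ⁅x, c i⁆ := by
        simp only [lie_sum, TensorProduct.LieModule.lie_tmul_right, Finset.sum_add_distrib]
    _ = ∑ i, ∑ j, Φ (c j) ⁅x, b i⁆ • b j ⊗ₜ[k] c i +
          ∑ i, ∑ j, Φ ⁅x, c i⁆ (b j) • b i ⊗ₜ[k] c j := by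
        congr 1 <;> refine Finset.sum_congr rfl fun i _ ↦ ?_
        · conv_lhs => rw [lie_left i]
          simp only [sum_tmul, smul_tmul']
        · conv_lhs => rw [lie_right i]
          simp only [tmul_sum, tmul_smul]
    _ = 0 := by
        rw [Finset.sum_comm, ← Finset.sum_add_distrib]
        refine Finset.sum_eq_zero fun i _ ↦ ?_
        rw [← Finset.sum_add_distrib]
        refine Finset.sum_eq_zero fun j _ ↦ ?_
        rw [hinv, ← add_smul, add_neg_cancel, zero_smul]

lemma exists_invariant_tensor_lift_traceForm_eq_finrank {W : Type*} [AddCommGroup W] [Module k W]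
    [LieRingModule L W] [LieModule k L W] (J : LieIdeal k L) [FiniteDimensional k J]
    (hJ : ((traceForm k L W).restrict J.toSubmodule).Nondegenerate) :
    ∃ t : maxTrivSubmodule k L (L ⊗[k] L),
      TensorProduct.lift (traceForm k L W) t.1 = finrank k J := by
  classical
  let Φ : LinearMap.BilinForm k J := (traceForm k L W).restrict J.toSubmodule
  have hΦ : LinearMap.BilinForm.lieInvariant (M := J) L Φ :=
    fun x y z ↦ traceForm_lieInvariant k L W x y z
  let b := finBasis k J
  refine ⟨⟨TensorProduct.LieModule.mapIncl J J (∑ i, b i ⊗ₜ Φ.dualBasis hJ b i), fun x ↦ ?_⟩, ?_⟩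
  · rw [← LieModuleHom.map_lie, lie_sum_tmul_dualBasis (V := J) (Φ := Φ) hJ hΦ, map_zero]
  · have trace_eq_one (i : Fin (finrank k J)) :
        traceForm k L W (b i) (Φ.dualBasis hJ b i) = 1 := by
      rw [traceForm_comm]
      exact (LinearMap.BilinForm.apply_dualBasis_left hJ b i i).trans (if_pos rfl)
    simp [TensorProduct.LieModule.mapIncl_def, trace_eq_one]

end InvariantTensor

section Semisimple

lemma bijective_of_isIrreducible {k L W : Type*} [Field k] [LieRing L] [AddCommGroup W]
    [Module k W] [FiniteDimensional k W] [LieRingModule L W] [IsIrreducible k L W]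
    (f : W →ₗ⁅k,L⁆ W) (hf : f ≠ 0) :
    Function.Bijective f := by
  have hinj : Function.Injective f := by
    rw [← LieModuleHom.ker_eq_bot]
    refine (eq_bot_or_eq_top f.ker).resolve_right fun htop ↦ hf ?_
    ext w
    simp [← LieModuleHom.mem_ker, htop]
  exact ⟨hinj, LinearMap.injective_iff_surjective (f := (f : W →ₗ[k] W)).mp hinj⟩

lemma derivedSeries_one_eq_top (R L : Type*) [CommRing R] [LieRing L] [LieAlgebra R L]
    [IsSemisimple R L] : derivedSeries R L 1 = ⊤ := by
  obtain ⟨J, hJ⟩ := exists_isCompl (derivedSeries R L 1)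
  have : IsLieAbelian J := by
    rw [LieSubmodule.lie_abelian_iff_lie_self_eq_bot, eq_bot_iff, ← hJ.inf_eq_bot]
    exact le_inf (LieSubmodule.mono_lie le_top le_top) (LieSubmodule.lie_le_left _ _)
  have hJ_bot : J = ⊥ := HasTrivialRadical.eq_bot_of_isSolvable J
  simpa [hJ_bot] using hJ.sup_eq_top

lemma derivation_eq_zero_of_isTrivial {R L W : Type*} [CommRing R] [LieRing L] [LieAlgebra R L]
    [AddCommGroup W] [Module R W] [LieRingModule L W] [LieModule R L W] [IsTrivial L W]
    (hL : derivedSeries R L 1 = ⊤) (D : LieDerivation R L W) : D = 0 := by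
  have hker : (derivedSeries R L 1).toSubmodule ≤ LinearMap.ker D.toLinearMap := by
    rw [derivedSeries_def, derivedSeriesOfIdeal_succ, derivedSeriesOfIdeal_zero,
      LieSubmodule.lieIdeal_oper_eq_linear_span', Submodule.span_le]
    rintro _ ⟨x, -, y, -, rfl⟩
    change D ⁅x, y⁆ = 0
    rw [D.apply_lie_eq_sub, trivial_lie_zero, trivial_lie_zero, sub_zero]
  rw [hL] at hker
  ext x
  exact hker (Submodule.mem_top (x := x))

variable {k L W : Type*} [Field k] [LieRing L] [LieAlgebra k L]
  [IsSemisimple k L] [AddCommGroup W] [Module k W] [LieRingModule L W] [LieModule k L W]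

lemma exists_ideal_nondegenerate_restrict_traceForm (h : traceForm k L W ≠ 0) :
    ∃ J : LieIdeal k L, J ≠ ⊥ ∧ ((traceForm k L W).restrict J.toSubmodule).Nondegenerate := by
  let S := LieAlgebra.InvariantForm.orthogonal _ (traceForm_lieInvariant k L W) ⊤
  have hS : S.toSubmodule = LinearMap.ker (traceForm k L W) := by
    simp [S, LinearMap.BilinForm.orthogonal_top_eq_ker (traceForm_isSymm k L W).isRefl]
  obtain ⟨J, hJ⟩ := exists_isCompl S
  refine ⟨J, ?_, (traceForm_isSymm k L W).nondegenerate_restrict_of_isCompl_ker ?_⟩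
  · rintro rfl
    rw [eq_top_of_isCompl_bot hJ, LieSubmodule.top_toSubmodule] at hS
    exact h (LinearMap.ker_eq_top.mp hS.symm)
  · exact hS ▸ (LieSubmodule.isCompl_toSubmodule.mpr hJ).symm

variable [CharZero k] [FiniteDimensional k W]

lemma isTrivial_of_traceForm_eq_zero [IsIrreducible k L W] (h : traceForm k L W = 0) :
    IsTrivial L W := by
  have hnil : LieModule.IsNilpotent L W := by
    have := isNilpotent_derivedSeries_of_traceForm_eq_zero h
    rw [isNilpotent_iff_forall' (R := k)] at this ⊢
    exact fun x ↦ this ⟨x, derivedSeries_one_eq_top k L ▸ LieSubmodule.mem_top x⟩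
  have : Nontrivial W := nontrivial_of_isIrreducible k L W
  have : Nontrivial (maxTrivSubmodule k L W) := nontrivial_max_triv_of_isNilpotent k L W
  rw [isTrivial_iff_max_triv_eq_top k]
  exact LieSubmodule.eq_top_of_isIrreducible k L W _

lemma inner_surjective_of_isIrreducible [FiniteDimensional k L] [IsIrreducible k L W] :
    Function.Surjective (LieDerivation.inner k L W) := by
  by_cases h : traceForm k L W = 0
  · have := isTrivial_of_traceForm_eq_zero h
    intro D
    exact ⟨0, by rw [map_zero, derivation_eq_zero_of_isTrivial (derivedSeries_one_eq_top k L) D]⟩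
  · obtain ⟨J, hJ_ne_bot, hJ⟩ := exists_ideal_nondegenerate_restrict_traceForm h
    obtain ⟨t, ht⟩ := exists_invariant_tensor_lift_traceForm_eq_finrank J hJ
    refine inner_surjective_of_casimir_bijective t (bijective_of_isIrreducible _ fun hzero ↦ ?_)
    have casimir_eq_zero : (casimir W t : W →ₗ[k] W) = 0 := by rw [hzero]; rfl
    have hrank : (finrank k J : k) = 0 := by
      rw [← ht, ← trace_casimir, casimir_eq_zero, map_zero]
    rw [Nat.cast_eq_zero] at hrank
    exact hJ_ne_bot (LieSubmodule.toSubmodule_eq_bot J |>.mp (Submodule.finrank_eq_zero.mp hrank))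

end Semisimple

section Coefficients

variable {R L W V : Type*} [CommRing R] [LieRing L] [LieAlgebra R L]
  [AddCommGroup W] [Module R W] [LieRingModule L W] [LieModule R L W]
  [AddCommGroup V] [Module R V] [LieRingModule L V] [LieModule R L V]

/-- The derivation `x ↦ f (D x)` obtained from `D` by a change of coefficients along `f`. -/
def mapDerivation (f : W →ₗ⁅R,L⁆ V) (D : LieDerivation R L W) : LieDerivation R L V where
  __ := (f : W →ₗ[R] V) ∘ₗ D.toLinearMap
  leibniz' x y := by simp

/-- The derivation `D` regarded as taking its values in a Lie submodule `N`. -/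
def codRestrictDerivation (N : LieSubmodule R L W) (D : LieDerivation R L W)
    (hD : ∀ x, D x ∈ N) : LieDerivation R L N where
  __ := D.toLinearMap.codRestrict N.toSubmodule hD
  leibniz' x y := Subtype.ext (D.apply_lie_eq_sub x y)

lemma exists_inner_eq_of_mem {N : LieSubmodule R L W}
    (hN : Function.Surjective (LieDerivation.inner R L N)) (D : LieDerivation R L W)
    (hD : ∀ x, D x ∈ N) : ∃ m, LieDerivation.inner R L W m = D := by
  obtain ⟨m, hm⟩ := hN (codRestrictDerivation N D hD)
  exact ⟨m, LieDerivation.ext fun x ↦ congrArg Subtype.val (LieDerivation.congr_fun hm x)⟩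

lemma inner_surjective_of_submodule_of_quotient (N : LieSubmodule R L W)
    (hN : Function.Surjective (LieDerivation.inner R L N))
    (hQ : Function.Surjective (LieDerivation.inner R L (W ⧸ N))) :
    Function.Surjective (LieDerivation.inner R L W) := by
  intro D
  obtain ⟨q, hq⟩ := hQ (mapDerivation (LieSubmodule.Quotient.mk' N) D)
  obtain ⟨w, rfl⟩ := LieSubmodule.Quotient.surjective_mk' N q
  have sub_mem (x : L) : (D - LieDerivation.inner R L W w) x ∈ N := by
    rw [← LieSubmodule.Quotient.mk_eq_zero, LieDerivation.sub_apply, map_sub, sub_eq_zero]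
    exact (LieDerivation.congr_fun hq x).symm
  obtain ⟨m, hm⟩ := exists_inner_eq_of_mem hN _ sub_mem
  exact ⟨m + w, by rw [map_add, hm, sub_add_cancel]⟩

end Coefficients

section FiniteDimensional

variable {k L : Type*} [Field k] [CharZero k] [LieRing L] [LieAlgebra k L]
  [FiniteDimensional k L] [IsSemisimple k L]

theorem inner_surjective_of_finiteDimensional {W : Type*} [AddCommGroup W] [Module k W]
    [LieRingModule L W] [LieModule k L W] [FiniteDimensional k W] :
    Function.Surjective (LieDerivation.inner k L W) := by
  induction hn : finrank k W using Nat.strong_induction_on generalizing W with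
  | _ n ih =>
    subst hn
    rcases subsingleton_or_nontrivial W with _ | _
    · exact fun D ↦ ⟨0, LieDerivation.ext fun x ↦ Subsingleton.elim _ _⟩
    by_cases hirr : IsIrreducible k L W
    · exact inner_surjective_of_isIrreducible
    obtain ⟨N, hN_bot, hN_top⟩ : ∃ N : LieSubmodule k L W, N ≠ ⊥ ∧ N ≠ ⊤ := by
      by_contra! h
      exact hirr (IsIrreducible.mk h)
    rw [ne_eq, ← LieSubmodule.toSubmodule_eq_bot] at hN_bot
    rw [ne_eq, ← LieSubmodule.toSubmodule_eq_top] at hN_top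
    have : FiniteDimensional k (W ⧸ N) :=
      inferInstanceAs (FiniteDimensional k (W ⧸ N.toSubmodule))
    have finrank_quotient : finrank k (W ⧸ N) + finrank k N = finrank k W :=
      N.toSubmodule.finrank_quotient_add_finrank
    have finrank_pos : 0 < finrank k N :=
      Nat.pos_of_ne_zero fun h ↦ hN_bot (Submodule.finrank_eq_zero.mp h)
    exact inner_surjective_of_submodule_of_quotient N
      (ih _ (Submodule.finrank_lt hN_top) rfl) (ih _ (by lia) rfl)

end FiniteDimensional

section LocallyFinite

lemma exists_finite_lieSubmodule_ge {R L M : Type*} [CommRing R] [LieRing L]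
    [AddCommGroup M] [Module R M] [LieRingModule L M]
    (hM : ∀ m : M, ∃ N : LieSubmodule R L M, m ∈ N ∧ Module.Finite R N)
    (P : Submodule R M) (hP : P.FG) :
    ∃ N : LieSubmodule R L M, P ≤ N.toSubmodule ∧ Module.Finite R N := by
  induction P, hP using Submodule.fg_induction with
  | singleton m =>
    obtain ⟨N, hm, hN⟩ := hM m
    exact ⟨N, (Submodule.span_singleton_le_iff_mem _ _).mpr hm, hN⟩
  | sup P₁ P₂ _ _ h₁ h₂ =>
    obtain ⟨N₁, hP₁, hN₁⟩ := h₁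
    obtain ⟨N₂, hP₂, hN₂⟩ := h₂
    refine ⟨N₁ ⊔ N₂, ?_, ?_⟩
    · rw [LieSubmodule.sup_toSubmodule]
      exact sup_le_sup hP₁ hP₂
    · change Module.Finite R (N₁ ⊔ N₂).toSubmodule
      rw [LieSubmodule.sup_toSubmodule]
      exact Submodule.finite_sup _ _

theorem inner_surjective_of_locallyFinite {k L M : Type*} [Field k] [CharZero k]
    [LieRing L] [LieAlgebra k L] [FiniteDimensional k L] [IsSemisimple k L]
    [AddCommGroup M] [Module k M] [LieRingModule L M] [LieModule k L M]
    (hM : ∀ m : M, ∃ N : LieSubmodule k L M, m ∈ N ∧ FiniteDimensional k N) :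
    Function.Surjective (LieDerivation.inner k L M) := by
  intro D
  obtain ⟨N, hDN, _⟩ := exists_finite_lieSubmodule_ge hM (LinearMap.range D.toLinearMap)
    (Submodule.fg_range _)
  exact exists_inner_eq_of_mem inner_surjective_of_finiteDimensional D fun x ↦ hDN ⟨x, rfl⟩

end LocallyFinite

section BaseChange

variable (k K L : Type*) [CommRing k] [CommRing K] [Algebra k K] [LieRing L] [LieAlgebra k L]

/-- The homomorphism `x ↦ 1 ⊗ x` of a Lie algebra into its extension of scalars. -/
def toExtendScalars : L →ₗ⁅k⁆ K ⊗[k] L where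
  __ := TensorProduct.mk k K L 1
  map_lie' := by simp

variable {K L}

lemma lieModule_of_isScalarTower (M : Type*) [LieAlgebra K L] [IsScalarTower k K L]
    [AddCommGroup M] [Module K M] [Module k M] [IsScalarTower k K M]
    [LieRingModule L M] [LieModule K L M] : LieModule k L M where
  smul_lie c x m := by
    rw [← algebraMap_smul K c x, smul_lie, algebraMap_smul]
  lie_smul c x m := by
    rw [← algebraMap_smul K c m, lie_smul, algebraMap_smul]

variable {k}

lemma eq_lie_of_forall_one_tmul_eq_lie {M : Type*} [AddCommGroup M] [Module K M]
    [LieRingModule (K ⊗[k] L) M] [LieModule K (K ⊗[k] L) M] (d : K ⊗[k] L →ₗ[K] M) (m : M)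
    (h : ∀ x : L, d (1 ⊗ₜ x) = ⁅(1 ⊗ₜ x : K ⊗[k] L), m⁆) (u : K ⊗[k] L) :
    d u = ⁅u, m⁆ := by
  induction u with
  | zero => simp
  | add u v hu hv => rw [map_add, hu, hv, add_lie]
  | tmul s x =>
    have hsx : s ⊗ₜ[k] x = s • (1 : K) ⊗ₜ[k] x := by
      rw [TensorProduct.smul_tmul', smul_eq_mul, mul_one]
    rw [hsx, map_smul, smul_lie, h]

end BaseChange

end Whitehead

/-- Let `k` be a field of characteristic zero, `g` a
finite-dimensional semisimple Lie algebra over `k`, `K` a commutative `k`-algebra,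
and `M` a module over the Lie `K`-algebra `g_K = K ⊗[k] g` which is locally finite
as a `g`-module (where `g` acts through `x ↦ 1 ⊗ x`): every `m ∈ M` lies in a
finite-dimensional `k`-subspace stable under the action of `g`.  Then every
`K`-linear derivation of `g_K` with values in `M` is inner. -/
theorem stmt_18 {k g K M : Type*} [Field k] [CharZero k]
    [LieRing g] [LieAlgebra k g] [FiniteDimensional k g]
    [LieAlgebra.IsSemisimple k g]
    [CommRing K] [Algebra k K]
    [AddCommGroup M] [Module K M] [Module k M] [IsScalarTower k K M]
    [LieRingModule (K ⊗[k] g) M] [LieModule K (K ⊗[k] g) M]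
    (hlf : ∀ m : M, ∃ W : Submodule k M,
      m ∈ W ∧ FiniteDimensional k ↥W ∧
        ∀ (x : g), ∀ w ∈ W, ⁅((1 : K) ⊗ₜ[k] x : K ⊗[k] g), w⁆ ∈ W) :
    ∀ d : (K ⊗[k] g) →ₗ[K] M,
      (∀ u v : K ⊗[k] g, d ⁅u, v⁆ = ⁅u, d v⁆ - ⁅v, d u⁆) →
      ∃ m : M, ∀ u : K ⊗[k] g, d u = ⁅u, m⁆ := by
  intro d hd
  let φ := Whitehead.toExtendScalars k K g
  have : LieModule k (K ⊗[k] g) M := Whitehead.lieModule_of_isScalarTower (K := K) k M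
  let : LieRingModule g M := LieRingModule.compLieHom M φ
  have : LieModule k g M := LieModule.compLieHom M φ
  have locallyFinite (m : M) : ∃ N : LieSubmodule k g M, m ∈ N ∧ FiniteDimensional k N := by
    obtain ⟨W, hm, hfin, hW⟩ := hlf m
    exact ⟨{ W with lie_mem := fun {x w} hw ↦ hW x w hw }, hm, hfin⟩
  let D : LieDerivation k g M :=
    { toLinearMap := d.restrictScalars k ∘ₗ (φ : g →ₗ[k] K ⊗[k] g)
      leibniz' := fun x y ↦
        (congrArg d (φ.map_lie x y)).trans (hd (φ x) (φ y)) }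
  obtain ⟨m, hm⟩ := Whitehead.inner_surjective_of_locallyFinite locallyFinite D
  refine ⟨m, Whitehead.eq_lie_of_forall_one_tmul_eq_lie d m fun x ↦ ?_⟩
  exact (LieDerivation.congr_fun hm x).symm
end
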